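/- arXiv:2503.22630 — 2 statements merged into one kernel-verified Lean document; each statement's English description precedes it below -/
import Mathlib

section
/- There exists a Sidon subset S of ℝ such that S + S = ℝ. -/
open Pointwise

def IsSidon {G : Type*} [AddCommGroup G] (S : Set G) : Prop :=
  ∀ a b c d : G, a ∈ S → b ∈ S → c ∈ S → d ∈ S → a + b = c + d →
    ({a, b} : Set G) = {c, d}

/-!
Let `G` be an infinite abelian group with fewer than `#G` elements killed by `2` or by `3`, such as
`ℝ`. Well-order `G` in type `(#G).ord` and treat its elements `r` one at a time, keeping a Sidon set
`T` with `#T < #G`. If `r` is not yet in `T + T`, adjoin a pair `x`, `r - x`. This preserves the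
Sidon property unless one of `x`, `2x`, `3x`, `4x` lies in a set of fewer than `#G` combinations of
`r` and elements of `T`, and by the torsion assumption this rules out fewer than `#G` choices of
`x`.
-/

open Cardinal Set

universe u

section Cardinality

theorem mk_biUnion_lt_of_finite {ι α : Type u} {κ : Cardinal.{u}} (hκ : ℵ₀ ≤ κ) {s : Set ι}
    (hs : #s < κ) {A : ι → Set α} (hA : ∀ i ∈ s, (A i).Finite) : #(⋃ i ∈ s, A i) < κ := by
  rcases s.finite_or_infinite with hfin | hinf
  · exact (hfin.biUnion hA).lt_aleph0.trans_le hκ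
  · calc
      #(⋃ i ∈ s, A i) ≤ #s * ⨆ i : s, #(A i) := mk_biUnion_le A s
      _ ≤ #s * ℵ₀ := by gcongr; exact ciSup_le' fun i ↦ (hA i i.2).countable.le_aleph0
      _ = #s := mul_aleph0_eq (aleph0_le_mk_iff.2 hinf.to_subtype)
      _ < κ := hs

theorem mk_preimage_lt_of_mk_ker_lt {G H : Type u} [AddGroup G] [AddGroup H] {κ : Cardinal.{u}}
    (hκ : ℵ₀ ≤ κ) (f : G →+ H) (hf : #f.ker < κ) {s : Set H} (hs : #s < κ) :
    #(f ⁻¹' s) < κ := by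
  have mk_fiber_le (y : H) : #(f ⁻¹' {y}) ≤ #f.ker := by
    rcases (f ⁻¹' {y}).eq_empty_or_nonempty with hy | ⟨x, rfl⟩
    · simp [hy]
    · exact (mk_congr (f.fiberEquivKer x)).le
  calc
    #(f ⁻¹' s) = #(⋃ y ∈ s, f ⁻¹' {y}) := by rw [biUnion_preimage_singleton]
    _ ≤ #s * ⨆ y : s, #(f ⁻¹' {y.1}) := mk_biUnion_le _ s
    _ ≤ #s * #f.ker := by gcongr; exact ciSup_le' fun y ↦ mk_fiber_le y
    _ < κ := mul_lt_of_lt hκ hs hf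

end Cardinality

section TransfiniteExtension

variable {α ι : Type*}

theorem exists_eq_step_biUnion_Iio [LinearOrder ι] [WellFoundedLT ι]
    (step : Set α → ι → Set α) : ∃ A : ι → Set α, ∀ i, A i = step (⋃ j ∈ Iio i, A j) i :=
  ⟨wellFounded_lt.fix fun i A ↦ step (⋃ (j) (hj : j ∈ Iio i), A j hj) i,
    wellFounded_lt.fix_eq _⟩

theorem biUnion_of_forall_biUnion_Iic [LinearOrder ι] {P : Set α → Prop}
    (hP : ∀ C, IsChain (· ⊆ ·) C → (∀ T ∈ C, P T) → P (⋃₀ C)) {A : ι → Set α} {s : Set ι}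
    (hs : IsLowerSet s) (hA : ∀ i ∈ s, P (⋃ j ∈ Iic i, A j)) : P (⋃ i ∈ s, A i) := by
  have union_eq : ⋃ i ∈ s, A i = ⋃₀ ((fun i ↦ ⋃ j ∈ Iic i, A j) '' s) := by
    ext a
    simp only [sUnion_image, mem_iUnion, mem_Iic, exists_prop]
    exact ⟨fun ⟨i, hi, ha⟩ ↦ ⟨i, hi, i, le_rfl, ha⟩,
      fun ⟨i, hi, j, hji, ha⟩ ↦ ⟨j, hs hji hi, ha⟩⟩
  have mono : Monotone fun i ↦ ⋃ j ∈ Iic i, A j :=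
    fun _ _ h ↦ biUnion_subset_biUnion_left (Iic_subset_Iic.2 h)
  rw [union_eq]
  exact hP _ (mono.isChain_image (isChain_of_trichotomous s)) (forall_mem_image.2 hA)

theorem exists_forall_of_finite_extension {α ι : Type u} [Infinite ι] {P : Set α → Prop}
    {Q : ι → Set α → Prop}
    (hP : ∀ C, IsChain (· ⊆ ·) C → (∀ T ∈ C, P T) → P (⋃₀ C)) (hQ : ∀ i, Monotone (Q i))
    (hstep : ∀ T, P T → #T < #ι → ∀ i, ∃ F : Set α, F.Finite ∧ P (T ∪ F) ∧ Q i (T ∪ F)) :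
    ∃ S, P S ∧ ∀ i, Q i S := by
  obtain ⟨_, _, hord⟩ := exists_ord_eq_type_lt ι
  have hstep_total (T : Set α) (i : ι) :
      ∃ F : Set α, F.Finite ∧ (P T → #T < #ι → P (T ∪ F) ∧ Q i (T ∪ F)) := by
    by_cases hT : P T ∧ #T < #ι
    · obtain ⟨F, hF, hext⟩ := hstep T hT.1 hT.2 i
      exact ⟨F, hF, fun _ _ ↦ hext⟩
    · exact ⟨∅, finite_empty, fun h h' ↦ absurd ⟨h, h'⟩ hT⟩
  choose step step_finite step_spec using hstep_total
  obtain ⟨A, hA⟩ := exists_eq_step_biUnion_Iio step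
  have A_finite (i : ι) : (A i).Finite := hA i ▸ step_finite _ i
  have stage_spec (i : ι) (hi : P (⋃ j ∈ Iio i, A j)) :
      P (⋃ j ∈ Iic i, A j) ∧ Q i (⋃ j ∈ Iic i, A j) := by
    have union_eq : ⋃ j ∈ Iic i, A j = (⋃ j ∈ Iio i, A j) ∪ step (⋃ j ∈ Iio i, A j) i := by
      rw [← hA i, ← Iio_insert, biUnion_insert, union_comm]
    rw [union_eq]
    exact step_spec _ i hi
      (mk_biUnion_lt_of_finite (aleph0_le_mk ι) (mk_Iio_lt i hord) fun j _ ↦ A_finite j)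
  have stage_P (i : ι) : P (⋃ j ∈ Iio i, A j) := by
    induction i using WellFoundedLT.induction with
    | ind i ih =>
      exact biUnion_of_forall_biUnion_Iic hP (isLowerSet_Iio i)
        fun j hj ↦ (stage_spec j (ih j hj)).1
  exact ⟨⋃ i ∈ Set.univ, A i,
    biUnion_of_forall_biUnion_Iic hP isLowerSet_univ fun i _ ↦ (stage_spec i (stage_P i)).1,
    fun i ↦ hQ i (biUnion_subset_biUnion_left (subset_univ _)) (stage_spec i (stage_P i)).2⟩

end TransfiniteExtension

namespace IsSidon

variable {G : Type*} [AddCommGroup G] {T : Set G} {r x : G}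

protected theorem sUnion {C : Set (Set G)} (hC : DirectedOn (· ⊆ ·) C)
    (hS : ∀ S ∈ C, IsSidon S) : IsSidon (⋃₀ C) := by
  intro a b c d ha hb hc hd h
  have hsub : {a, b, c, d} ⊆ ⋃₀ C := by
    simp only [insert_subset_iff, singleton_subset_iff, *, and_self]
  obtain ⟨S, hSC, hS_sub⟩ := hC.exists_mem_subset_of_finite_of_subset_sUnion
    (let ⟨S, hS, _⟩ := ha; ⟨S, hS⟩) (toFinite _) hsub
  simp only [insert_subset_iff, singleton_subset_iff] at hS_sub
  obtain ⟨ha, hb, hc, hd⟩ := hS_sub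
  exact hS S hSC a b c d ha hb hc hd h

protected theorem insert (hT : IsSidon T) (hx : x ∉ T + T - T) (hxx : x + x ∉ T + T) :
    IsSidon (insert x T) := by
  have add_ne {a b c : G} (ha : a ∈ T) (hb : b ∈ T) (hc : c ∈ T) : x + a ≠ b + c := fun h ↦
    hx (eq_sub_of_add_eq h ▸ sub_mem_sub (add_mem_add hb hc) ha)
  have self_add_ne {b c : G} (hb : b ∈ T) (hc : c ∈ T) : x + x ≠ b + c := fun h ↦
    hxx (h ▸ add_mem_add hb hc)
  have pair_eq {b c d : G} (hb : b ∈ insert x T) (hc : c ∈ insert x T) (hd : d ∈ insert x T)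
      (h : x + b = c + d) : ({x, b} : Set G) = {c, d} := by
    rcases hc with rfl | hc
    · rw [add_left_cancel h]
    rcases hd with rfl | hd
    · rw [add_left_cancel (h.trans (add_comm c d)), pair_comm]
    rcases hb with rfl | hb
    · exact absurd h (self_add_ne hc hd)
    · exact absurd h (add_ne hb hc hd)
  intro a b c d ha hb hc hd h
  rcases ha with rfl | haT
  · exact pair_eq hb hc hd h
  rcases hb with rfl | hbT
  · rw [pair_comm]
    exact pair_eq (.inr haT) hc hd (by rwa [add_comm])
  rcases hc with rfl | hcT
  · exact (pair_eq hd (.inr haT) (.inr hbT) h.symm).symm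
  rcases hd with rfl | hdT
  · rw [pair_comm c]
    exact (pair_eq (.inr hcT) (.inr haT) (.inr hbT) (by rw [add_comm, h])).symm
  exact hT a b c d haT hbT hcT hdT h

theorem insert_sub_insert (hT : IsSidon T) (hr : r ∉ T + T) {A : Set G} (h0A : 0 ∈ A)
    (hrA : r ∈ A) (hTA : T ⊆ A) (hx : ∀ n ∈ Finset.Icc 1 4, n • x ∉ A + A - (A + A)) :
    IsSidon (insert (r - x) (insert x T)) := by
  have nsmul_ne {n : ℕ} (hn : n ∈ Finset.Icc 1 4) {a b c d : G} (ha : a ∈ A) (hb : b ∈ A)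
      (hc : c ∈ A) (hd : d ∈ A) : n • x ≠ a + b - (c + d) := fun h ↦
    hx n hn (h ▸ sub_mem_sub (add_mem_add ha hb) (add_mem_add hc hd))
  -- Each forbidden coincidence, solved for `x`, determines some `n • x`; the sole exception is
  -- `(r - x) + x = a + b`, which `hr` excludes.
  refine (hT.insert ?_ ?_).insert ?_ ?_
  · rintro ⟨_, ⟨a, ha, b, hb, rfl⟩, c, hc, h⟩
    exact nsmul_ne (n := 1) (by simp) (hTA ha) (hTA hb) (hTA hc) h0A (by grind)
  · rintro ⟨a, ha, b, hb, h⟩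
    exact nsmul_ne (n := 2) (by simp) (hTA ha) (hTA hb) h0A h0A (by grind)
  · rintro ⟨_, ⟨a, rfl | ha, b, rfl | hb, rfl⟩, c, rfl | hc, h⟩
    · exact nsmul_ne (n := 2) (by simp) hrA h0A h0A h0A (by grind)
    · exact nsmul_ne (n := 3) (by simp) hrA (hTA hc) h0A h0A (by grind)
    · exact nsmul_ne (n := 1) (by simp) hrA h0A (hTA hb) h0A (by grind)
    · exact nsmul_ne (n := 2) (by simp) hrA (hTA hc) (hTA hb) h0A (by grind)
    · exact nsmul_ne (n := 1) (by simp) hrA h0A (hTA ha) h0A (by grind)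
    · exact nsmul_ne (n := 2) (by simp) hrA (hTA hc) (hTA ha) h0A (by grind)
    · exact hr ⟨a, ha, b, hb, sub_left_injective h⟩
    · exact nsmul_ne (n := 1) (by simp) hrA (hTA hc) (hTA ha) (hTA hb) (by grind)
  · rintro ⟨a, rfl | ha, b, rfl | hb, h⟩
    · exact nsmul_ne (n := 4) (by simp) hrA hrA h0A h0A (by grind)
    · exact nsmul_ne (n := 3) (by simp) hrA hrA (hTA hb) h0A (by grind)
    · exact nsmul_ne (n := 3) (by simp) hrA hrA (hTA ha) h0A (by grind)
    · exact nsmul_ne (n := 2) (by simp) hrA hrA (hTA ha) (hTA hb) (by grind)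

end IsSidon

section FullSumset

variable {G : Type u} [AddCommGroup G]

theorem mk_setOf_nsmul_mem_lt [Infinite G] {n : ℕ} (hn : #{g : G | n • g = 0} < #G) {s : Set G}
    (hs : #s < #G) : #{x | n • x ∈ s} < #G :=
  mk_preimage_lt_of_mk_ker_lt (aleph0_le_mk G) (nsmulAddMonoidHom n) hn hs

theorem mk_setOf_exists_nsmul_mem_lt [Infinite G] (h2 : #{g : G | 2 • g = 0} < #G)
    (h3 : #{g : G | 3 • g = 0} < #G) {s : Set G} (hs : #s < #G) :
    #{x | ∃ n ∈ Finset.Icc 1 4, n • x ∈ s} < #G := by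
  have h4s : #{x | 4 • x ∈ s} < #G := by
    simpa only [mem_ofPred_eq, ← mul_nsmul] using
      mk_setOf_nsmul_mem_lt h2 (mk_setOf_nsmul_mem_lt h2 hs)
  have union_eq : {x | ∃ n ∈ Finset.Icc 1 4, n • x ∈ s} =
      s ∪ ({x | 2 • x ∈ s} ∪ ({x | 3 • x ∈ s} ∪ {x | 4 • x ∈ s})) := by
    ext x
    simp [show Finset.Icc 1 4 = {1, 2, 3, 4} from rfl]
  have union_lt {t t' : Set G} (ht : #t < #G) (ht' : #t' < #G) : #↥(t ∪ t') < #G :=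
    (mk_union_le t t').trans_lt (add_lt_of_lt (aleph0_le_mk G) ht ht')
  rw [union_eq]
  exact union_lt hs (union_lt (mk_setOf_nsmul_mem_lt h2 hs)
    (union_lt (mk_setOf_nsmul_mem_lt h3 hs) h4s))

theorem IsSidon.exists_finite_extension [Infinite G] (h2 : #{g : G | 2 • g = 0} < #G)
    (h3 : #{g : G | 3 • g = 0} < #G) {T : Set G} (hT : IsSidon T) (hcard : #T < #G) {E : Set G}
    {r : G} (hE : #G ≤ #{x | x ∈ E ∧ r - x ∈ E}) :
    ∃ F ⊆ E, F.Finite ∧ IsSidon (T ∪ F) ∧ r ∈ (T ∪ F) + (T ∪ F) := by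
  by_cases hr : r ∈ T + T
  · exact ⟨∅, empty_subset E, finite_empty, by rwa [union_empty], by rwa [union_empty]⟩
  have hG : ℵ₀ ≤ #G := aleph0_le_mk G
  let A : Set G := insert 0 (insert r T)
  have hA : #A < #G := by
    have h1 : (1 : Cardinal) < #G := one_lt_aleph0.trans_le hG
    exact mk_insert_le.trans_lt
      (add_lt_of_lt hG (mk_insert_le.trans_lt (add_lt_of_lt hG hcard h1)) h1)
  have hAA : #↥(A + A) < #G := mk_add_le.trans_lt (mul_lt_of_lt hG hA hA)
  have hdiff : #↥(A + A - (A + A)) < #G := mk_sub_le.trans_lt (mul_lt_of_lt hG hAA hAA)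
  obtain ⟨x, ⟨hxE, hrxE⟩, hx⟩ :=
    sdiff_nonempty_of_mk_lt_mk ((mk_setOf_exists_nsmul_mem_lt h2 h3 hdiff).trans_le hE)
  refine ⟨{r - x, x}, pair_subset hrxE hxE, toFinite _, ?_, ?_⟩
  · rw [union_comm, insert_union, singleton_union]
    exact hT.insert_sub_insert hr (mem_insert 0 _) (mem_insert_of_mem _ (mem_insert r T))
      ((subset_insert r T).trans (subset_insert 0 _)) fun n hn hnx ↦ hx ⟨n, hn, hnx⟩
  · exact ⟨r - x, by simp, x, by simp, sub_add_cancel r x⟩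

theorem mk_setOf_nsmul_eq_zero_lt [Nontrivial G] [IsAddTorsionFree G] {n : ℕ} (hn : n ≠ 0) :
    #{g : G | n • g = 0} < #G := by
  have ker_eq : {g : G | n • g = 0} = {0} := by ext g; simp [hn]
  rw [ker_eq, mk_singleton]
  exact one_lt_iff_nontrivial.2 ‹_›

theorem exists_sidon_real_full_sumset_general [Infinite G] (h2 : #{g : G | 2 • g = 0} < #G)
    (h3 : #{g : G | 3 • g = 0} < #G) {E : Set G}
    (hE : ∀ r, #G ≤ #{x | x ∈ E ∧ r - x ∈ E}) :
    ∃ S ⊆ E, IsSidon S ∧ S + S = Set.univ := by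
  obtain ⟨S, ⟨hSE, hS⟩, hsum⟩ := exists_forall_of_finite_extension
    (P := fun T : Set G ↦ T ⊆ E ∧ IsSidon T) (Q := fun r T ↦ r ∈ T + T)
    (fun C hC hCP ↦ ⟨sUnion_subset fun T hT ↦ (hCP T hT).1,
      IsSidon.sUnion hC.directedOn fun T hT ↦ (hCP T hT).2⟩)
    (fun r T T' hTT' hr ↦ add_subset_add hTT' hTT' hr)
    (fun T ⟨hTE, hT⟩ hcard r ↦ by
      obtain ⟨F, hFE, hF, hTF, hr⟩ := hT.exists_finite_extension h2 h3 hcard (hE r)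
      exact ⟨F, hF, ⟨union_subset hTE hFE, hTF⟩, hr⟩)
  exact ⟨S, hSE, hS, eq_univ_of_forall hsum⟩

end FullSumset

/-- There exists a Sidon subset `S` of `ℝ` with `S + S = ℝ`. -/
theorem exists_sidon_real_full_sumset :
    ∃ S : Set ℝ, IsSidon S ∧ S + S = Set.univ := by
  obtain ⟨S, -, hS⟩ := exists_sidon_real_full_sumset_general (E := (Set.univ : Set ℝ))
    (mk_setOf_nsmul_eq_zero_lt two_ne_zero) (mk_setOf_nsmul_eq_zero_lt three_ne_zero) (by simp)
  exact ⟨S, hS⟩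
end

section
/- Assuming a well-ordering of ℝ, for every n ≥ 1 there exists a subset E of ℝⁿ with full outer Lebesgue measure (hence Hausdorff dimension n) avoiding repeated distances: for any points w, x, y, z ∈ E with {x,w} ≠ {y,z} (as unordered pairs of distinct points), ‖x − w‖ ≠ ‖y − z‖. -/
open MeasureTheory

/-!
Well-order the measurable sets of positive measure in type at most `𝔠` and pick one point from
each, so that no new point `v` repeats a distance: `v` has to avoid the spheres centred at a chosen
point whose radius is a distance between chosen points, and the perpendicular bisectors of pairs of
chosen points. These are fewer than `𝔠` sets, and any translate of the moment curve
`t ↦ (t, t ^ 2, …, t ^ n)` meets each of them in only finitely many points. By Fubini, some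
translate of the curve meets the given set of positive measure for a set of parameters of positive
measure; this set has cardinality `𝔠`, so one of its parameters gives an admissible point.
-/

open Set Cardinal Module
open scoped RealInnerProductSpace Polynomial

theorem exists_forall_rel_image_Iio {ι α : Type*} [LinearOrder ι] [WellFoundedLT ι]
    {P : ι → Set α → α → Prop} (hP : ∀ i (g : Iio i → α), ∃ v, P i (range g) v) :
    ∃ f : ι → α, ∀ i, P i (f '' Iio i) (f i) := by
  choose pick hpick using hP
  let f : ι → α := wellFounded_lt.fix fun i rec => pick i fun j => rec j j.2
  have hf (i : ι) : f i = pick i fun j => f j := wellFounded_lt.fix_eq _ i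
  refine ⟨f, fun i => ?_⟩
  rw [image_eq_range, hf i]
  exact hpick i fun j => f j

section RepeatedDistances

variable {X : Type*} [PseudoMetricSpace X]

/-- A set avoids repeated distances if distinct unordered pairs of distinct points of the set
realize distinct distances. -/
def NoRepeatedDistances (E : Set X) : Prop :=
  ∀ w ∈ E, ∀ x ∈ E, ∀ y ∈ E, ∀ z ∈ E, x ≠ w → y ≠ z →
    ({x, w} : Set X) ≠ {y, z} → dist x w ≠ dist y z

/-- The point `v` is distance-generic over `A` if adjoining it to `A` creates no repetition of
distances: its distances to the points of `A` are pairwise distinct and differ from all distances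
within `A`. -/
def IsDistanceGeneric (A : Set X) (v : X) : Prop :=
  (∀ w ∈ A, ∀ y ∈ A, ∀ z ∈ A, dist v w ≠ dist y z) ∧ A.InjOn (dist v)

section Sequence

variable {ι : Type*} [LinearOrder ι] {f : ι → X}

theorem eq_and_eq_of_dist_eq_of_lt (hf : ∀ i, IsDistanceGeneric (f '' Iio i) (f i))
    {a b c d : ι} (hab : a < b) (hdc : d < c) (h : dist (f b) (f a) = dist (f c) (f d)) :
    f b = f c ∧ f a = f d := by
  rcases lt_trichotomy b c with hbc | rfl | hcb
  · exact absurd h.symm <| (hf c).1 _ (mem_image_of_mem f hdc) _ (mem_image_of_mem f hbc)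
      _ (mem_image_of_mem f (hab.trans hbc))
  · exact ⟨rfl, (hf b).2 (mem_image_of_mem f hab) (mem_image_of_mem f hdc) h⟩
  · exact absurd h <| (hf b).1 _ (mem_image_of_mem f hab) _ (mem_image_of_mem f hcb)
      _ (mem_image_of_mem f (hdc.trans hcb))

theorem noRepeatedDistances_range (hf : ∀ i, IsDistanceGeneric (f '' Iio i) (f i)) :
    NoRepeatedDistances (range f) := by
  rintro _ ⟨a, rfl⟩ _ ⟨b, rfl⟩ _ ⟨c, rfl⟩ _ ⟨d, rfl⟩ hba hcd hne hdist
  wlog hab : a < b generalizing a b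
  · exact this b a hba.symm (by rwa [pair_comm]) (by rwa [dist_comm])
      ((not_lt.1 hab).lt_of_ne fun h => hba (congrArg f h))
  wlog hdc : d < c generalizing c d
  · exact this d c hcd.symm (by rwa [pair_comm (f d)]) (by rwa [dist_comm (f d)])
      ((not_lt.1 hdc).lt_of_ne fun h => hcd (congrArg f h))
  obtain ⟨hbc, had⟩ := eq_and_eq_of_dist_eq_of_lt hf hab hdc hdist
  exact hne (by rw [hbc, had])

end Sequence

end RepeatedDistances

universe u

theorem exists_noRepeatedDistances_forall_inter_nonempty {ι X : Type u} [PseudoMetricSpace X]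
    (F : ι → Set X) (hF : ∀ i, ∀ A : Set X, #A < #ι → ∃ v ∈ F i, IsDistanceGeneric A v) :
    ∃ E : Set X, (∀ i, (F i ∩ E).Nonempty) ∧ NoRepeatedDistances E := by
  obtain ⟨_, _, hord⟩ := exists_ord_eq_type_lt ι
  obtain ⟨f, hf⟩ := exists_forall_rel_image_Iio
    (P := fun i A v => v ∈ F i ∧ IsDistanceGeneric A v) fun i g =>
      hF i (range g) (mk_range_le.trans_lt (mk_Iio_lt i hord))
  exact ⟨range f, fun i => ⟨f i, (hf i).1, mem_range_self i⟩,
    noRepeatedDistances_range fun i => (hf i).2⟩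

section FullOuterMeasure

variable {X : Type*} [MeasurableSpace X] {μ : Measure X} {E : Set X}

/-- A set has full outer measure if its complement has inner measure zero. This is phrased as
meeting every measurable set of nonzero measure, which is meaningful when `μ` is infinite. -/
def HasFullOuterMeasure (μ : Measure X) (E : Set X) : Prop :=
  ∀ F, MeasurableSet F → μ F ≠ 0 → (F ∩ E).Nonempty

namespace HasFullOuterMeasure

theorem measure_eq_zero_of_subset_compl (hE : HasFullOuterMeasure μ E) {F : Set X}
    (hF : MeasurableSet F) (hFE : F ⊆ Eᶜ) : μ F = 0 := by
  by_contra hμF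
  obtain ⟨v, hvF, hvE⟩ := hE F hF hμF
  exact hFE hvF hvE

theorem iSup_isClosed_subset_compl_eq_zero [TopologicalSpace X] [OpensMeasurableSpace X]
    (hE : HasFullOuterMeasure μ E) :
    (⨆ (F : Set X) (_ : IsClosed F ∧ F ⊆ Eᶜ), μ F) = 0 := by
  simp only [ENNReal.iSup_eq_zero]
  rintro F ⟨hF, hFE⟩
  exact hE.measure_eq_zero_of_subset_compl hF.measurableSet hFE

theorem measure_ne_zero [NeZero μ] (hE : HasFullOuterMeasure μ E) : μ E ≠ 0 := by
  intro hμE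
  have hcompl : μ (toMeasurable μ E)ᶜ = 0 :=
    hE.measure_eq_zero_of_subset_compl (measurableSet_toMeasurable μ E).compl
      (compl_subset_compl.2 (subset_toMeasurable μ E))
  refine NeZero.ne μ (Measure.measure_univ_eq_zero.1 ?_)
  rw [← union_compl_self (toMeasurable μ E)]
  exact measure_union_null (by rwa [measure_toMeasurable]) hcompl

end HasFullOuterMeasure

theorem dimH_eq_finrank_of_measure_ne_zero {V : Type*} [NormedAddCommGroup V] [NormedSpace ℝ V]
    [FiniteDimensional ℝ V] [MeasurableSpace V] [BorelSpace V] (μ : Measure V)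
    [μ.IsAddHaarMeasure] {E : Set V} (hE : μ E ≠ 0) : dimH E = finrank ℝ V := by
  refine le_antisymm ?_ (not_lt.1 fun hlt => hE ?_)
  · exact (dimH_mono (subset_univ E)).trans_eq (Real.dimH_univ_eq_finrank V)
  · have hac : μ ≪ Measure.hausdorffMeasure (finrank ℝ V) :=
      Measure.absolutelyContinuous_isAddHaarMeasure _ _
    exact measure_zero_of_dimH_lt (d := finrank ℝ V) (by simpa using hac) (by simpa using hlt)

end FullOuterMeasure

theorem mk_measurableSet_le_continuum (X : Type*) [MeasurableSpace X]
    [MeasurableSpace.CountablyGenerated X] : #{s : Set X | MeasurableSet s} ≤ 𝔠 := by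
  obtain ⟨b, hb, rfl⟩ := ‹MeasurableSpace.CountablyGenerated X›.isCountablyGenerated
  exact MeasurableSpace.cardinal_measurableSet_le_continuum
    (hb.le_aleph0.trans aleph0_le_continuum)

theorem continuum_le_mk_of_measure_ne_zero {X : Type*} [MeasurableSpace X] [StandardBorelSpace X]
    {ν : Measure X} [NullSingletonClass ν] {T : Set X}
    (hT : MeasurableSet T) (hνT : ν T ≠ 0) : 𝔠 ≤ #T := by
  have : StandardBorelSpace T := hT.standardBorel
  have hunc : ¬ Countable T := fun h => hνT (h.to_set.measure_zero ν)
  simpa using (mk_congr_lift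
    (PolishSpace.measurableEquivNatBoolOfNotCountable hunc).toEquiv).ge

theorem mk_iUnion_lt_continuum {α ι : Type*} {S : ι → Set α} (hι : #ι < 𝔠)
    (hS : ∀ i, (S i).Countable) : #(⋃ i, S i) < 𝔠 := by
  rw [← lift_lt_continuum]
  refine (mk_iUnion_le_lift S).trans_lt (mul_lt_of_lt aleph0_le_continuum ?_ ?_)
  · simpa using hι
  · exact (ciSup_le' fun i => lift_le_aleph0.2 (hS i).le_aleph0).trans_lt aleph0_lt_continuum

section TranslatesOfCurve

variable {G T : Type*} [AddGroup G] [MeasurableSpace G] [MeasurableAdd₂ G] [MeasurableSpace T]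
  {μ : Measure G} [SFinite μ] [μ.IsAddRightInvariant] {F : Set G} {γ : T → G}

theorem exists_measure_preimage_add_ne_zero (ν : Measure T) [SFinite ν] [NeZero ν]
    (hγ : Measurable γ) (hF : MeasurableSet F) (hμF : μ F ≠ 0) :
    ∃ x, ν {t | x + γ t ∈ F} ≠ 0 := by
  by_contra! hnull
  have hmeas : MeasurableSet {p : G × T | p.1 + γ p.2 ∉ F} :=
    (measurable_fst.add (hγ.comp measurable_snd)) hF.compl
  have hae : ∀ᵐ x ∂μ, ∀ᵐ t ∂ν, x + γ t ∉ F :=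
    .of_forall fun x => by simpa [ae_iff] using hnull x
  obtain ⟨t, ht⟩ := ((Measure.ae_ae_comm hmeas).1 hae).exists
  have hpre : μ ((· + γ t) ⁻¹' F) = 0 := by
    simpa only [ae_iff, not_not, preimage] using ht
  exact hμF (by rwa [measure_preimage_add_right] at hpre)

theorem exists_mem_forall_notMem_of_countable_preimage_add [StandardBorelSpace T]
    (ν : Measure T) [SFinite ν] [NeZero ν] [NullSingletonClass ν] {ι : Type*} {S : ι → Set G}
    (hγ : Measurable γ) (hF : MeasurableSet F) (hμF : μ F ≠ 0) (hι : #ι < 𝔠)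
    (hS : ∀ i x, {t | x + γ t ∈ S i}.Countable) : ∃ v ∈ F, ∀ i, v ∉ S i := by
  obtain ⟨x, hx⟩ := exists_measure_preimage_add_ne_zero ν hγ hF hμF
  have hlarge : 𝔠 ≤ #{t | x + γ t ∈ F} :=
    continuum_le_mk_of_measure_ne_zero ((hγ.const_add x) hF) hx
  have hsmall : #(⋃ i, {t | x + γ t ∈ S i}) < 𝔠 := mk_iUnion_lt_continuum hι fun i => hS i x
  obtain ⟨t, htF, htS⟩ := not_subset.1 fun hsub =>
    (hsmall.trans_le hlarge).not_ge (mk_le_mk_of_subset hsub)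
  exact ⟨x + γ t, htF, fun i hi => htS (mem_iUnion.2 ⟨i, hi⟩)⟩

end TranslatesOfCurve

section MomentCurve

variable {V : Type*} [NormedAddCommGroup V] [InnerProductSpace ℝ V] {n : ℕ}
  (b : OrthonormalBasis (Fin n) ℝ V)

/-- The moment curve `t ↦ (t, t ^ 2, …, t ^ n)` in the coordinates of an orthonormal basis. -/
noncomputable def momentCurve (t : ℝ) : V :=
  ∑ k : Fin n, t ^ (k + 1 : ℕ) • b k

theorem continuous_momentCurve : Continuous (momentCurve b) := by
  unfold momentCurve
  fun_prop

theorem inner_momentCurve (u : V) (t : ℝ) :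
    ⟪u, momentCurve b t⟫ = ∑ k, ⟪u, b k⟫ * t ^ (k + 1 : ℕ) := by
  simp [momentCurve, inner_sum, inner_smul_right, mul_comm]

theorem norm_sq_momentCurve (t : ℝ) :
    ‖momentCurve b t‖ ^ 2 = ∑ k : Fin n, t ^ (2 * (k + 1) : ℕ) := by
  rw [← real_inner_self_eq_norm_sq, momentCurve, b.orthonormal.inner_sum]
  simp [← pow_add, two_mul]

/-- The polynomial in `t` obtained by evaluating the function `v ↦ a * ‖v‖ ^ 2 + ⟪u, v⟫ + c`, whose
zero sets include all spheres and hyperplanes, at the point with parameter `t` of the moment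
curve. -/
noncomputable def momentCurvePolynomial (a : ℝ) (u : V) (c : ℝ) : ℝ[X] :=
  .C a * ∑ k : Fin n, .X ^ (2 * (k + 1) : ℕ) + ∑ k : Fin n, .C ⟪u, b k⟫ * .X ^ (k + 1 : ℕ) + .C c

theorem eval_momentCurvePolynomial (a : ℝ) (u : V) (c t : ℝ) :
    (momentCurvePolynomial b a u c).eval t =
      a * ‖momentCurve b t‖ ^ 2 + ⟪u, momentCurve b t⟫ + c := by
  simp [momentCurvePolynomial, Polynomial.eval_finsetSum, inner_momentCurve, norm_sq_momentCurve]

theorem coeff_two_mul_momentCurvePolynomial [NeZero n] (a : ℝ) (u : V) (c : ℝ) :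
    (momentCurvePolynomial b a u c).coeff (2 * n) = a := by
  have hlast : ∑ k : Fin n, (if n = k + 1 then (1 : ℝ) else 0) = 1 := by
    obtain ⟨m, rfl⟩ := Nat.exists_eq_succ_of_ne_zero (NeZero.ne n)
    rw [Fin.sum_univ_castSucc]
    simp [(Fin.is_lt _).ne']
  have hlow (k : Fin n) : 2 * n ≠ k + 1 := by lia
  simp [momentCurvePolynomial, Polynomial.coeff_X_pow, Polynomial.coeff_C, hlow, hlast,
    NeZero.ne n]

theorem coeff_add_one_momentCurvePolynomial_zero (u : V) (c : ℝ) (k : Fin n) :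
    (momentCurvePolynomial b 0 u c).coeff (k + 1) = ⟪u, b k⟫ := by
  simp [momentCurvePolynomial, Polynomial.coeff_X_pow, Fin.val_inj]

theorem momentCurvePolynomial_ne_zero [NeZero n] {a : ℝ} {u : V} (c : ℝ) (h : a ≠ 0 ∨ u ≠ 0) :
    momentCurvePolynomial b a u c ≠ 0 := by
  intro hzero
  have ha : a = 0 := by
    rw [← coeff_two_mul_momentCurvePolynomial b a u c, hzero, Polynomial.coeff_zero]
  subst ha
  refine h.resolve_left (not_not.2 rfl)
    (InnerProductSpace.ext_inner_right_basis b.toBasis fun k => ?_)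
  rw [b.coe_toBasis, inner_zero_left, ← coeff_add_one_momentCurvePolynomial_zero b u c, hzero,
    Polynomial.coeff_zero]

theorem finite_setOf_quadratic_momentCurve_eq_zero [NeZero n] {a : ℝ} {u : V} (c : ℝ)
    (h : a ≠ 0 ∨ u ≠ 0) :
    {t | a * ‖momentCurve b t‖ ^ 2 + ⟪u, momentCurve b t⟫ + c = 0}.Finite := by
  simpa only [Polynomial.IsRoot.def, eval_momentCurvePolynomial] using
    Polynomial.finite_setOfPred_isRoot (momentCurvePolynomial_ne_zero b c h)

theorem finite_setOf_add_momentCurve_mem_sphere [NeZero n] (x w : V) (r : ℝ) :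
    {t | x + momentCurve b t ∈ Metric.sphere w r}.Finite := by
  refine (finite_setOf_quadratic_momentCurve_eq_zero b (a := 1) (u := (2 : ℝ) • (x - w))
    (‖x - w‖ ^ 2 - r ^ 2) (.inl one_ne_zero)).subset fun t ht => ?_
  have hnorm : ‖(x - w) + momentCurve b t‖ = r := by
    rwa [sub_add_eq_add_sub, ← mem_sphere_iff_norm]
  rw [mem_ofPred_eq, ← hnorm, norm_add_sq_real, real_inner_smul_left]
  ring

theorem finite_setOf_add_momentCurve_mem_perpBisector [NeZero n] (x : V) {w z : V} (hwz : w ≠ z) :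
    {t | x + momentCurve b t ∈ AffineSubspace.perpBisector w z}.Finite := by
  refine (finite_setOf_quadratic_momentCurve_eq_zero b (a := 0) (u := z - w)
    ⟪z - w, x - midpoint ℝ w z⟫ (.inr (sub_ne_zero.2 hwz.symm))).subset fun t ht => ?_
  rw [mem_ofPred_eq, zero_mul, zero_add, ← inner_add_right, add_comm, sub_add_eq_add_sub]
  exact AffineSubspace.mem_perpBisector_iff_inner_eq_zero'.1 ht

end MomentCurve

section Main

variable {V : Type*} [NormedAddCommGroup V] [InnerProductSpace ℝ V] [FiniteDimensional ℝ V]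
  [Nontrivial V] [MeasurableSpace V] [BorelSpace V]

theorem exists_mem_isDistanceGeneric (μ : Measure V) [μ.IsAddHaarMeasure] {F A : Set V}
    (hF : MeasurableSet F) (hμF : μ F ≠ 0) (hA : #A < 𝔠) : ∃ v ∈ F, IsDistanceGeneric A v := by
  have : NeZero (finrank ℝ V) := ⟨finrank_pos.ne'⟩
  let b := stdOrthonormalBasis ℝ V
  let spheres (p : A × A × A) : Set V := Metric.sphere p.1 (dist p.2.1 p.2.2)
  let bisectors (p : {p : A × A // p.1 ≠ p.2}) : Set V :=
    AffineSubspace.perpBisector (p.1.1 : V) p.1.2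
  have hcard : #((A × A × A) ⊕ {p : A × A // p.1 ≠ p.2}) < 𝔠 := by
    have hmul {κ₁ κ₂ : Cardinal} := mul_lt_of_lt (a := κ₁) (b := κ₂) aleph0_le_continuum
    have hpair : #(A × A) < 𝔠 := by simpa using hmul hA hA
    have htriple : #(A × A × A) < 𝔠 := by simpa using hmul hA hpair
    simpa using add_lt_of_lt aleph0_le_continuum htriple ((mk_subtype_le _).trans_lt hpair)
  obtain ⟨v, hvF, hv⟩ := exists_mem_forall_notMem_of_countable_preimage_add
    (S := Sum.elim spheres bisectors) volume (continuous_momentCurve b).measurable hF hμF hcard (by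
      rintro (p | p) x
      · exact (finite_setOf_add_momentCurve_mem_sphere b x _ _).countable
      · exact (finite_setOf_add_momentCurve_mem_perpBisector b x
          (Subtype.coe_ne_coe.2 p.2)).countable)
  refine ⟨v, hvF, fun w hw y hy z hz h => ?_, fun w hw z hz h => ?_⟩
  · exact hv (.inl (⟨w, hw⟩, ⟨y, hy⟩, ⟨z, hz⟩)) h
  · by_contra hwz
    exact hv (.inr ⟨(⟨w, hw⟩, ⟨z, hz⟩), fun h => hwz (congrArg Subtype.val h)⟩)
      (AffineSubspace.mem_perpBisector_iff_dist_eq.2 h)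

theorem exists_full_outer_no_repeated_distance_general (μ : Measure V) [μ.IsAddHaarMeasure] :
    ∃ E : Set V, HasFullOuterMeasure μ E ∧ dimH E = finrank ℝ V ∧ NoRepeatedDistances E := by
  have hcard : #{F : Set V // MeasurableSet F ∧ μ F ≠ 0} ≤ 𝔠 :=
    (mk_subtype_mono fun _ hF => hF.1).trans (mk_measurableSet_le_continuum V)
  obtain ⟨E, hmeets, hdist⟩ := exists_noRepeatedDistances_forall_inter_nonempty
    (fun F : {F : Set V // MeasurableSet F ∧ μ F ≠ 0} => F.1) fun F A hA =>
      exists_mem_isDistanceGeneric μ F.2.1 F.2.2 (hA.trans_le hcard)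
  have hfull : HasFullOuterMeasure μ E := fun F hF hμF => hmeets ⟨F, hF, hμF⟩
  exact ⟨E, hfull, dimH_eq_finrank_of_measure_ne_zero μ hfull.measure_ne_zero, hdist⟩

end Main

/-- For every `n ≥ 1` there is a subset `E` of `ℝⁿ` of full outer Lebesgue measure (its
complement has inner measure zero), hence of Hausdorff dimension `n`, avoiding repeated
distances: distinct unordered pairs of distinct points of `E` realize distinct
distances. -/
theorem exists_full_outer_no_repeated_distance (n : ℕ) (hn : 1 ≤ n) :
    ∃ E : Set (EuclideanSpace ℝ (Fin n)),
      (⨆ (F : Set (EuclideanSpace ℝ (Fin n))) (_ : IsClosed F ∧ F ⊆ Eᶜ), volume F) = 0 ∧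
      dimH E = n ∧
      ∀ w ∈ E, ∀ x ∈ E, ∀ y ∈ E, ∀ z ∈ E, x ≠ w → y ≠ z →
        ({x, w} : Set (EuclideanSpace ℝ (Fin n))) ≠ {y, z} → dist x w ≠ dist y z := by
  have : Nonempty (Fin n) := Fin.pos_iff_nonempty.1 hn
  obtain ⟨E, hfull, hdim, hdist⟩ := exists_full_outer_no_repeated_distance_general
    (volume : Measure (EuclideanSpace ℝ (Fin n)))
  exact ⟨E, hfull.iSup_isClosed_subset_compl_eq_zero, by simpa using hdim, hdist⟩
end
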